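/- For every n ≥ 2, the affine braid group B(Ã_{n−1}) is torsion-free: if g ∈ B(Ã_{n−1}) and g^k = 1 for some integer k ≥ 1, then g = 1. -/

import Mathlib

/-- The braid relation word `s_i s_j s_i (s_j s_i s_j)⁻¹` in a free group. -/
def braidRelWord {I : Type*} (i j : I) : FreeGroup I :=
  FreeGroup.of i * FreeGroup.of j * FreeGroup.of i *
    (FreeGroup.of j * FreeGroup.of i * FreeGroup.of j)⁻¹

/-- The commutation relation word `s_i s_j (s_j s_i)⁻¹` in a free group. -/
def commRelWord {I : Type*} (i j : I) : FreeGroup I :=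
  FreeGroup.of i * FreeGroup.of j * (FreeGroup.of j * FreeGroup.of i)⁻¹

/-- The defining relations of the affine braid group `B(Ã_{n-1})`: for `n ≥ 3` the braid
relations `s_i s_{i+1} s_i = s_{i+1} s_i s_{i+1}` (`i ∈ ℤ/n`) and the commutation relations
`s_i s_j = s_j s_i` for `i - j ≠ ±1`; for `n = 2` there are no relations, so that
`B(Ã_1)` is the free group on two generators. -/
def affineBraidRels (n : ℕ) : Set (FreeGroup (ZMod n)) :=
  if n ≤ 2 then ∅
  else {r | (∃ i : ZMod n, r = braidRelWord i (i + 1)) ∨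
            (∃ i j : ZMod n, i - j ≠ 1 ∧ i - j ≠ -1 ∧ r = commRelWord i j)}

/-- The affine braid group `B(Ã_{n-1})`. -/
abbrev AffineBraidGroup (n : ℕ) := PresentedGroup (affineBraidRels n)

/-- The generator `s_i` of the affine braid group `B(Ã_{n-1})`, `i ∈ ℤ/n`. -/
def affineBraidGen (n : ℕ) (i : ZMod n) : AffineBraidGroup n := PresentedGroup.of i

/-- The defining relations of the Artin monoid of a simply laced Coxeter graph. -/
inductive ArtinMonoidRel {I : Type*} (G : SimpleGraph I) : FreeMonoid I → FreeMonoid I → Prop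
  | comm (i j : I) (h : ¬ G.Adj i j) :
      ArtinMonoidRel G (FreeMonoid.of i * FreeMonoid.of j) (FreeMonoid.of j * FreeMonoid.of i)
  | braid (i j : I) (h : G.Adj i j) :
      ArtinMonoidRel G (FreeMonoid.of i * (FreeMonoid.of j * FreeMonoid.of i))
        (FreeMonoid.of j * (FreeMonoid.of i * FreeMonoid.of j))

/-- The Artin monoid of a simply laced Coxeter graph. -/
abbrev ArtinMonoid {I : Type*} (G : SimpleGraph I) := PresentedMonoid (ArtinMonoidRel G)

namespace ArtinMonoid

variable {I : Type*} {G : SimpleGraph I}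

/-- The standard generators of the Artin monoid. -/
def gen (G : SimpleGraph I) (i : I) : ArtinMonoid G := PresentedMonoid.of _ i

theorem gen_comm {a b : I} (h : ¬ G.Adj a b) : gen G a * gen G b = gen G b * gen G a :=
  PresentedMonoid.mk_eq_mk_of_rel (.comm a b h)

theorem gen_braid {a b : I} (h : G.Adj a b) :
    gen G a * (gen G b * gen G a) = gen G b * (gen G a * gen G b) :=
  PresentedMonoid.mk_eq_mk_of_rel (.braid a b h)

theorem gen_comm_assoc {a b : I} (h : ¬ G.Adj a b) (Z : ArtinMonoid G) :
    gen G a * (gen G b * Z) = gen G b * (gen G a * Z) := by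
  rw [← mul_assoc, gen_comm h, mul_assoc]

theorem gen_braid_assoc {a b : I} (h : G.Adj a b) (Z : ArtinMonoid G) :
    gen G a * (gen G b * (gen G a * Z)) = gen G b * (gen G a * (gen G b * Z)) := by
  simpa only [mul_assoc] using congrArg (· * Z) (gen_braid h)

/-- A map on generators satisfying the defining relations extends to the Artin monoid. -/
def lift {M : Type*} [Monoid M] (f : I → M) (hc : ∀ i j, ¬ G.Adj i j → f i * f j = f j * f i)
    (hb : ∀ i j, G.Adj i j → f i * (f j * f i) = f j * (f i * f j)) : ArtinMonoid G →* M :=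
  PresentedMonoid.lift f <| by
    rintro _ _ (⟨i, j, h⟩ | ⟨i, j, h⟩)
    · simpa using hc i j h
    · simpa using hb i j h

@[simp]
theorem lift_gen {M : Type*} [Monoid M] (f : I → M)
    (hc : ∀ i j, ¬ G.Adj i j → f i * f j = f j * f i)
    (hb : ∀ i j, G.Adj i j → f i * (f j * f i) = f j * (f i * f j)) (i : I) :
    lift f hc hb (gen G i) = f i := rfl

theorem hom_ext {M : Type*} [Monoid M] {f g : ArtinMonoid G →* M}
    (h : ∀ i, f (gen G i) = g (gen G i)) : f = g :=
  PresentedMonoid.ext _ h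

theorem eq_one_or_eq_gen_mul (x : ArtinMonoid G) : x = 1 ∨ ∃ a y, x = gen G a * y := by
  induction x using PresentedMonoid.inductionOn with | _ w
  induction w using FreeMonoid.casesOn with
  | one => exact .inl rfl
  | of_mul a w => exact .inr ⟨a, PresentedMonoid.mk _ w, rfl⟩

/-- The word length, as a homomorphism. -/
def lengthHom (G : SimpleGraph I) : ArtinMonoid G →* Multiplicative ℕ :=
  lift (fun _ => Multiplicative.ofAdd 1) (fun _ _ _ => rfl) (fun _ _ _ => rfl)

/-- The word length of an element of the Artin monoid. -/
def length (x : ArtinMonoid G) : ℕ := (lengthHom G x).toAdd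

@[simp]
theorem length_one : length (1 : ArtinMonoid G) = 0 := by simp [length]

@[simp]
theorem length_mul (x y : ArtinMonoid G) : length (x * y) = length x + length y := by
  simp [length]

@[simp]
theorem length_gen (i : I) : length (gen G i) = 1 := rfl

theorem eq_one_of_length_eq_zero {x : ArtinMonoid G} (h : length x = 0) : x = 1 := by
  rcases eq_one_or_eq_gen_mul x with rfl | ⟨a, y, rfl⟩
  · rfl
  · simp at h

theorem eq_one_of_mul_eq_one {x y : ArtinMonoid G} (h : x * y = 1) : x = 1 :=
  eq_one_of_length_eq_zero <| by have := congrArg length h; simp at this; exact this.1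

/-- The equality `gen G a * X = gen G b * Y` is witnessed by the least common multiple of the
two generators. -/
def FactorsThroughLcm (a b : I) (X Y : ArtinMonoid G) : Prop :=
  (a = b ∧ X = Y) ∨
  (a ≠ b ∧ ¬ G.Adj a b ∧ ∃ Z, X = gen G b * Z ∧ Y = gen G a * Z) ∨
  (G.Adj a b ∧ ∃ Z, X = gen G b * (gen G a * Z) ∧ Y = gen G a * (gen G b * Z))

namespace FactorsThroughLcm

variable {a b c : I} {X Y V : ArtinMonoid G}

theorem symm (h : FactorsThroughLcm a b X Y) : FactorsThroughLcm b a Y X := by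
  rcases h with ⟨rfl, rfl⟩ | ⟨hn, hc, Z, rfl, rfl⟩ | ⟨hb, Z, rfl, rfl⟩
  · exact .inl ⟨rfl, rfl⟩
  · exact .inr (.inl ⟨hn.symm, fun h => hc h.symm, Z, rfl, rfl⟩)
  · exact .inr (.inr ⟨hb.symm, Z, rfl, rfl⟩)

theorem mul_right (h : FactorsThroughLcm a b X Y) (T : ArtinMonoid G) :
    FactorsThroughLcm a b (X * T) (Y * T) := by
  rcases h with ⟨rfl, rfl⟩ | ⟨hn, hc, Z, rfl, rfl⟩ | ⟨hb, Z, rfl, rfl⟩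
  · exact .inl ⟨rfl, rfl⟩
  · exact .inr (.inl ⟨hn, hc, Z * T, by simp only [mul_assoc], by simp only [mul_assoc]⟩)
  · exact .inr (.inr ⟨hb, Z * T, by simp only [mul_assoc], by simp only [mul_assoc]⟩)

theorem eq (h : FactorsThroughLcm a a X Y) : X = Y := by
  rcases h with ⟨-, h⟩ | ⟨h, -⟩ | ⟨h, -⟩
  · exact h
  · exact absurd rfl h
  · exact absurd h G.irrefl

theorem of_not_adj (h : FactorsThroughLcm a b X Y) (hn : a ≠ b) (hab : ¬ G.Adj a b) :
    ∃ Z, X = gen G b * Z ∧ Y = gen G a * Z := by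
  rcases h with ⟨h, -⟩ | ⟨-, -, h⟩ | ⟨h, -⟩
  · exact absurd h hn
  · exact h
  · exact absurd h hab

theorem of_adj (h : FactorsThroughLcm a b X Y) (hab : G.Adj a b) :
    ∃ Z, X = gen G b * (gen G a * Z) ∧ Y = gen G a * (gen G b * Z) := by
  rcases h with ⟨h, -⟩ | ⟨-, h, -⟩ | ⟨-, h⟩
  · exact absurd h hab.ne
  · exact absurd hab h
  · exact h

/-- Transitivity when the middle generator commutes with the second one. -/
theorem trans_of_not_adj (ha : a ≠ b) (hcb : c ≠ b) (hca : c ≠ a)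
    (ih : ∀ (i j : I) (X' Y' : ArtinMonoid G), length X' < length V →
      gen G i * X' = gen G j * Y' → FactorsThroughLcm i j X' Y')
    (h₁ : FactorsThroughLcm a c X V) (h₂ : FactorsThroughLcm c b V Y) (nbc : ¬ G.Adj c b) :
    FactorsThroughLcm a b X Y := by
  obtain ⟨Z₂, hV, rfl⟩ := h₂.of_not_adj hcb nbc
  by_cases hac : G.Adj a c
  · obtain ⟨Z₁, rfl, rfl⟩ := h₁.of_adj hac
    by_cases hab : G.Adj a b
    · obtain ⟨T, hT, rfl⟩ :=
        (ih a b _ _ (by simp only [length_mul, length_gen] at *; omega) hV).of_adj hab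
      obtain ⟨S, rfl, hS⟩ :=
        (ih c b _ _ (by simp only [length_mul, length_gen] at *; omega) hT).of_not_adj hcb nbc
      have hl := congrArg length hT
      simp only [length_mul, length_gen] at hl
      obtain ⟨U, rfl, rfl⟩ :=
        (ih a c _ _ (by simp only [length_mul, length_gen] at *; omega) hS).of_adj hac
      refine .inr (.inr ⟨hab, gen G c * (gen G a * (gen G b * U)), ?_, ?_⟩)
      · rw [gen_braid_assoc hab, gen_comm_assoc nbc, ← gen_comm_assoc nbc U,
          ← gen_braid_assoc hac]
      · rw [← gen_comm_assoc nbc, ← gen_braid_assoc hac, gen_braid_assoc hab,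
          gen_comm_assoc nbc]
    · obtain ⟨T, hT, rfl⟩ :=
        (ih a b _ _ (by simp only [length_mul, length_gen] at *; omega) hV).of_not_adj ha hab
      obtain ⟨S, rfl, rfl⟩ :=
        (ih c b _ _ (by simp only [length_mul, length_gen] at *; omega) hT).of_not_adj hcb nbc
      refine .inr (.inl ⟨ha, hab, gen G c * (gen G a * S), ?_, ?_⟩)
      · rw [gen_comm_assoc hab, gen_comm_assoc nbc]
      · rw [gen_braid_assoc hac]
  · obtain ⟨Z₁, rfl, rfl⟩ := h₁.of_not_adj hca.symm hac
    have hca' : ¬ G.Adj c a := fun h => hac h.symm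
    by_cases hab : G.Adj a b
    · obtain ⟨T, rfl, rfl⟩ :=
        (ih a b _ _ (by simp only [length_mul, length_gen] at *; omega) hV).of_adj hab
      refine .inr (.inr ⟨hab, gen G c * T, ?_, ?_⟩)
      · rw [gen_comm_assoc nbc, gen_comm_assoc hca']
      · rw [gen_comm_assoc hca', gen_comm_assoc nbc]
    · obtain ⟨T, rfl, rfl⟩ :=
        (ih a b _ _ (by simp only [length_mul, length_gen] at *; omega) hV).of_not_adj ha hab
      refine .inr (.inl ⟨ha, hab, gen G c * T, ?_, ?_⟩)
      · rw [gen_comm_assoc nbc]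
      · rw [gen_comm_assoc hca']

theorem trans (hG : ∀ i j k, G.Adj i j → G.Adj j k → ¬ G.Adj i k)
    (ih : ∀ (i j : I) (X' Y' : ArtinMonoid G), length X' < length V →
      gen G i * X' = gen G j * Y' → FactorsThroughLcm i j X' Y')
    (h₁ : FactorsThroughLcm a c X V) (h₂ : FactorsThroughLcm c b V Y) :
    FactorsThroughLcm a b X Y := by
  by_cases hac : a = c
  · subst hac; rwa [h₁.eq]
  by_cases hcb : c = b
  · subst hcb; rwa [← h₂.eq]
  by_cases hab : a = b
  · subst hab
    left
    refine ⟨rfl, ?_⟩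
    by_cases h : G.Adj a c
    · obtain ⟨Z₁, rfl, rfl⟩ := h₁.of_adj h
      obtain ⟨Z₂, hV, rfl⟩ := h₂.of_adj h.symm
      have hV' := (ih _ _ _ _ (by simp only [length_mul, length_gen] at *; omega) hV).eq
      rw [(ih _ _ _ _ (by simp only [length_mul, length_gen] at *; omega) hV').eq]
    · obtain ⟨Z₁, rfl, rfl⟩ := h₁.of_not_adj hac h
      obtain ⟨Z₂, hV, rfl⟩ := h₂.of_not_adj hcb (fun h' => h h'.symm)
      rw [(ih _ _ _ _ (by simp only [length_mul, length_gen] at *; omega) hV).eq]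
  by_cases acb : G.Adj c b
  swap
  · exact trans_of_not_adj hab hcb (Ne.symm hac) ih h₁ h₂ acb
  by_cases aac : G.Adj a c
  swap
  · exact (trans_of_not_adj (Ne.symm hab) (Ne.symm hac) hcb ih h₂.symm h₁.symm
      (fun h => aac h.symm)).symm
  have aab := hG a c b aac acb
  obtain ⟨Z₁, rfl, rfl⟩ := h₁.of_adj aac
  obtain ⟨Z₂, hV, rfl⟩ := h₂.of_adj acb
  obtain ⟨T, hT₁, hT₂⟩ :=
    (ih a b _ _ (by simp only [length_mul, length_gen] at *; omega) hV).of_not_adj hab aab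
  have hl := congrArg length hT₁
  have hl' := congrArg length hT₂
  simp only [length_mul, length_gen] at hl hl'
  obtain ⟨S, rfl, rfl⟩ :=
    (ih c b _ _ (by simp only [length_mul, length_gen] at *; omega) hT₁).of_adj acb
  obtain ⟨S', rfl, hS⟩ :=
    (ih c a _ _ (by simp only [length_mul, length_gen] at *; omega) hT₂).of_adj aac.symm
  simp only [length_mul, length_gen] at hl hl'
  have hS' := (ih c c _ _ (by simp only [length_mul, length_gen] at *; omega) hS).eq
  obtain ⟨U, rfl, rfl⟩ :=
    (ih b a _ _ (by simp only [length_mul, length_gen] at *; omega) hS').of_not_adj (Ne.symm hab)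
    (fun h => aab h.symm)
  refine .inr (.inl ⟨hab, aab, gen G c * (gen G b * (gen G a * (gen G c * U))), ?_, ?_⟩)
  · rw [gen_comm_assoc aab, gen_braid_assoc aac, gen_braid_assoc acb]
  · rw [← gen_comm_assoc aab, gen_braid_assoc acb.symm, ← gen_braid_assoc aac,
      gen_comm_assoc aab]

end FactorsThroughLcm

/-- The relation induced on words by `FactorsThroughLcm` on first letters and remainders. -/
def WordsFactorThroughLcm (G : SimpleGraph I) : List I → List I → Prop
  | [], [] => True
  | a :: w, b :: y => FactorsThroughLcm a b (PresentedMonoid.mk (ArtinMonoidRel G) (.ofList w))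
      (PresentedMonoid.mk _ (.ofList y))
  | _, _ => False

theorem wordsFactorThroughLcm_of_conGen (hG : ∀ i j k, G.Adj i j → G.Adj j k → ¬ G.Adj i k)
    (N : ℕ) (ih : ∀ (i j : I) (X Y : ArtinMonoid G), length X < N →
      gen G i * X = gen G j * Y → FactorsThroughLcm i j X Y) {w y : FreeMonoid I}
    (h : ConGen.Rel (ArtinMonoidRel G) w y)
    (hN : length (PresentedMonoid.mk (ArtinMonoidRel G) w) ≤ N + 1) :
    WordsFactorThroughLcm G w.toList y.toList := by
  have length_eq {w y : FreeMonoid I} (h : ConGen.Rel (ArtinMonoidRel G) w y) :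
      length (PresentedMonoid.mk (ArtinMonoidRel G) w) = length (PresentedMonoid.mk _ y) :=
    congrArg length (PresentedMonoid.mk_eq_mk_iff.2 h)
  induction h with
  | of w y h =>
    rcases h with ⟨i, j, h⟩ | ⟨i, j, h⟩
    · by_cases hij : i = j
      · subst hij; exact .inl ⟨rfl, rfl⟩
      · exact .inr (.inl ⟨hij, h, 1, rfl, rfl⟩)
    · exact .inr (.inr ⟨h, 1, rfl, rfl⟩)
  | refl w =>
    cases w.toList with
    | nil => trivial
    | cons a w => exact .inl ⟨rfl, rfl⟩
  | @symm x y h ih' =>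
    have := ih' (by rw [length_eq h]; exact hN)
    revert this
    cases x.toList <;> cases y.toList <;> intro this
    · trivial
    · exact this
    · exact this
    · exact this.symm
  | @trans x y z h₁ h₂ ih₁ ih₂ =>
    have h₁' := ih₁ hN
    have h₂' := ih₂ (by rw [← length_eq h₁]; exact hN)
    have hy : length (PresentedMonoid.mk (ArtinMonoidRel G) (.ofList y.toList)) ≤ N + 1 := by
      rw [FreeMonoid.ofList_toList, ← length_eq h₁]; exact hN
    revert h₁' h₂' hy
    cases x.toList <;> cases y.toList <;> cases z.toList <;> intro h₁' h₂' hy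
    all_goals first | trivial | exact h₁'.elim | exact h₂'.elim | skip
    refine FactorsThroughLcm.trans hG (fun i j X' Y' hX => ih i j X' Y' ?_) h₁' h₂'
    have length_of (i : I) : length (PresentedMonoid.mk (ArtinMonoidRel G) (.of i)) = 1 :=
      length_gen i
    rw [FreeMonoid.ofList_cons, map_mul, length_mul, length_of] at hy
    omega
  | @mul w x y z h₁ h₂ ih₁ ih₂ =>
    rw [map_mul, length_mul] at hN
    have h₁' := ih₁ (by omega)
    have h₂' := ih₂ (by omega)
    have hyz : PresentedMonoid.mk (ArtinMonoidRel G) y = PresentedMonoid.mk _ z :=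
      PresentedMonoid.mk_eq_mk_iff.2 h₂
    rw [FreeMonoid.toList_mul, FreeMonoid.toList_mul]
    revert h₁'
    cases w.toList <;> cases x.toList <;> intro h₁'
    · exact h₂'
    · exact h₁'.elim
    · exact h₁'.elim
    · have := h₁'.mul_right (PresentedMonoid.mk _ y)
      nth_rewrite 2 [hyz] at this
      exact this

/-- Two equal products starting with generators factor through the least common multiple of these
generators (Garside). -/
theorem factorsThroughLcm (hG : ∀ i j k, G.Adj i j → G.Adj j k → ¬ G.Adj i k) (a b : I)
    (X Y : ArtinMonoid G) (h : gen G a * X = gen G b * Y) : FactorsThroughLcm a b X Y := by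
  induction hN : length X using Nat.strong_induction_on generalizing a b X Y with
  | _ N ih =>
    induction X using PresentedMonoid.inductionOn with | _ w
    induction Y using PresentedMonoid.inductionOn with | _ y
    have := wordsFactorThroughLcm_of_conGen hG N
      (fun i j X Y hX h => ih _ hX i j X Y h rfl)
      (w := FreeMonoid.of a * w) (y := FreeMonoid.of b * y)
      (PresentedMonoid.mk_eq_mk_iff.1 h) (by
        rw [map_mul, length_mul, hN, add_comm]
        exact le_rfl)
    exact this

theorem mul_left_cancel_of_triangleFree (hG : ∀ i j k, G.Adj i j → G.Adj j k → ¬ G.Adj i k)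
    {x y z : ArtinMonoid G} (h : x * y = x * z) : y = z := by
  induction hN : length x generalizing x with
  | zero => simpa [eq_one_of_length_eq_zero hN] using h
  | succ N ih =>
    rcases eq_one_or_eq_gen_mul x with rfl | ⟨a, x, rfl⟩
    · simpa using h
    · rw [mul_assoc, mul_assoc] at h
      exact ih (factorsThroughLcm hG a a _ _ h).eq (by simp at hN; omega)

/-- Reversal of words, as a homomorphism to the opposite monoid. -/
def reverse (G : SimpleGraph I) : ArtinMonoid G →* (ArtinMonoid G)ᵐᵒᵖ :=
  lift (fun i => .op (gen G i))
    (fun i j h => by simp only [← MulOpposite.op_mul, gen_comm h])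
    (fun i j h => by simp only [← MulOpposite.op_mul, mul_assoc, gen_braid h])

theorem reverse_reverse (x : ArtinMonoid G) :
    (reverse G (reverse G x).unop).unop = x := by
  have : ((reverse G).op.comp (reverse G)) =
      ((MulEquiv.opOp (ArtinMonoid G)).toMonoidHom) := hom_ext fun i => rfl
  exact congrArg (fun z => z.unop.unop) (DFunLike.congr_fun this x)

theorem isCancelMul (hG : ∀ i j k, G.Adj i j → G.Adj j k → ¬ G.Adj i k) :
    IsCancelMul (ArtinMonoid G) where
  mul_left_cancel _ _ _ h := mul_left_cancel_of_triangleFree hG h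
  mul_right_cancel x y z h := by
    have h' := congrArg (fun t => (reverse G t).unop) h
    simp only [map_mul, MulOpposite.unop_mul] at h'
    rw [← reverse_reverse y, mul_left_cancel_of_triangleFree hG h', reverse_reverse]

/-- Two generators have a least common right multiple. -/
theorem exists_lcm_gen (hG : ∀ i j k, G.Adj i j → G.Adj j k → ¬ G.Adj i k) (a b : I) :
    ∃ p q, gen G a * p = gen G b * q ∧
      ∀ w, gen G a ∣ w → gen G b ∣ w → gen G a * p ∣ w := by
  by_cases hab : a = b
  · subst hab; exact ⟨1, 1, rfl, fun w h _ => by simpa using h⟩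
  by_cases h : G.Adj a b
  · refine ⟨gen G b * gen G a, gen G a * gen G b, gen_braid h, ?_⟩
    rintro _ ⟨X, rfl⟩ ⟨Y, hY⟩
    obtain ⟨Z, rfl, -⟩ := (factorsThroughLcm hG _ _ _ _ hY).of_adj h
    exact ⟨Z, by simp only [mul_assoc]⟩
  · refine ⟨gen G b, gen G a, gen_comm h, ?_⟩
    rintro _ ⟨X, rfl⟩ ⟨Y, hY⟩
    obtain ⟨Z, rfl, -⟩ := (factorsThroughLcm hG _ _ _ _ hY).of_not_adj hab h
    exact ⟨Z, by simp only [mul_assoc]⟩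

/-- Two elements with a common right multiple have a least one. -/
theorem exists_lcm (hG : ∀ i j k, G.Adj i j → G.Adj j k → ¬ G.Adj i k)
    {x y z : ArtinMonoid G} (hx : x ∣ z) (hy : y ∣ z) :
    ∃ l, ∀ w, l ∣ w ↔ x ∣ w ∧ y ∣ w := by
  have := isCancelMul hG
  induction hN : length z using Nat.strong_induction_on generalizing x y z with
  | _ N ih =>
    rcases eq_one_or_eq_gen_mul x with rfl | ⟨a, x, rfl⟩
    · exact ⟨y, by simp⟩
    rcases eq_one_or_eq_gen_mul y with rfl | ⟨b, y, rfl⟩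
    · exact ⟨gen G a * x, by simp⟩
    obtain ⟨p, q, hpq, hm⟩ := exists_lcm_gen hG a b
    obtain ⟨t, rfl⟩ := hm z (dvd_of_mul_right_dvd hx) (dvd_of_mul_right_dvd hy)
    have cancel {u v w : ArtinMonoid G} : u * v ∣ u * w ↔ v ∣ w := by
      simp only [Dvd.dvd, mul_assoc, mul_right_inj]
    have hx' : x ∣ p * t := by rwa [mul_assoc, cancel] at hx
    have hy' : y ∣ q * t := by rwa [hpq, mul_assoc, cancel] at hy
    have hN' := congrArg length hpq
    simp only [length_mul, length_gen] at hN hN'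
    obtain ⟨l₁, h₁⟩ := ih _ (by simp only [length_mul]; omega) hx' (Dvd.intro t rfl) rfl
    obtain ⟨l₂, h₂⟩ := ih _ (by simp only [length_mul]; omega) hy' (Dvd.intro t rfl) rfl
    obtain ⟨u, rfl⟩ := ((h₁ l₁).1 dvd_rfl).2
    obtain ⟨v, rfl⟩ := ((h₂ l₂).1 dvd_rfl).2
    have hu : u ∣ t := cancel.1 ((h₁ (p * t)).2 ⟨hx', Dvd.intro t rfl⟩)
    have hv : v ∣ t := cancel.1 ((h₂ (q * t)).2 ⟨hy', Dvd.intro t rfl⟩)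
    obtain ⟨l, hl⟩ := ih _ (by omega) hu hv rfl
    have hul : u ∣ l := ((hl l).1 dvd_rfl).1
    have hvl : v ∣ l := ((hl l).1 dvd_rfl).2
    refine ⟨gen G a * p * l, fun w => ⟨fun hw => ⟨?_, ?_⟩, ?_⟩⟩
    · refine dvd_trans ?_ hw
      rw [mul_assoc, cancel]
      exact ((h₁ (p * l)).1 (cancel.2 hul)).1
    · refine dvd_trans ?_ hw
      rw [hpq, mul_assoc, cancel]
      exact ((h₂ (q * l)).1 (cancel.2 hvl)).1
    · rintro ⟨hxw, hyw⟩
      obtain ⟨w, rfl⟩ := hm w (dvd_of_mul_right_dvd hxw) (dvd_of_mul_right_dvd hyw)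
      rw [cancel, hl]
      rw [hpq, mul_assoc, cancel] at hyw
      rw [mul_assoc, cancel] at hxw
      exact ⟨cancel.1 ((h₁ _).2 ⟨hxw, Dvd.intro w rfl⟩),
        cancel.1 ((h₂ _).2 ⟨hyw, Dvd.intro w rfl⟩)⟩

end ArtinMonoid

/-- In a cancellative monoid with trivial units and least common right multiples, roots of powers
of a central element are unique. -/
theorem eq_of_pow_eq_pow_of_lcm {M : Type*} [Monoid M] [IsCancelMul M]
    (hunit : ∀ u v : M, u * v = 1 → u = 1)
    (hlcm : ∀ x y : M, ∃ l, ∀ w, l ∣ w ↔ x ∣ w ∧ y ∣ w) {m D : M} (hD : Commute D m) {k : ℕ}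
    (hk : 1 ≤ k) (h : m ^ k = D ^ k) : m = D := by
  have cancel {u v w : M} : u * v ∣ u * w ↔ v ∣ w := by
    simp only [Dvd.dvd, mul_assoc, mul_right_inj]
  have antisymm {x y : M} (hxy : x ∣ y) (hyx : y ∣ x) : x = y := by
    obtain ⟨u, rfl⟩ := hxy
    obtain ⟨v, hv⟩ := hyx
    have huv : u * v = 1 := by rwa [mul_assoc, left_eq_mul] at hv
    rw [hunit u v huv, mul_one]
  have lcm_family (f : ℕ → M) (j : ℕ) : ∃ l, ∀ w, l ∣ w ↔ ∀ i < j, f i ∣ w := by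
    induction j with
    | zero => exact ⟨1, by simp⟩
    | succ j ih =>
      obtain ⟨l, hl⟩ := ih
      obtain ⟨l', hl'⟩ := hlcm l (f j)
      refine ⟨l', fun w => ?_⟩
      rw [hl', hl, Nat.forall_lt_succ_right]
  obtain ⟨l, hl⟩ := lcm_family (fun i => m ^ i * D ^ (k - i)) k
  have hlt : ∀ i < k, m ^ i * D ^ (k - i) ∣ l := (hl l).1 dvd_rfl
  have hle (i : ℕ) (hi : i ≤ k) : m ^ i * D ^ (k - i) ∣ l := by
    rcases hi.lt_or_eq with hi | rfl
    · exact hlt i hi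
    · simpa [h] using hlt 0 (by omega)
  have shift (i j : ℕ) : D * (m ^ (i + 1) * D ^ j) = m * (m ^ i * D ^ (j + 1)) := by
    rw [← mul_assoc, (hD.pow_right _).eq, pow_succ', pow_succ']
    simp only [mul_assoc]
  have shift' (i : ℕ) (hi : i < k) :
      D * (m ^ (i + 1) * D ^ (k - (i + 1))) = m * (m ^ i * D ^ (k - i)) := by
    rw [shift, show k - (i + 1) + 1 = k - i by omega]
  have key : m * l = D * l := by
    refine antisymm ?_ ?_
    · have hm (i : ℕ) (hi : i < k) : m * (m ^ i * D ^ (k - i)) ∣ D * l := by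
        rw [← shift' i hi, cancel]
        exact hle _ hi
      obtain ⟨w, hw⟩ := dvd_of_mul_right_dvd (hm 0 (by omega))
      rw [hw, cancel, hl]
      intro i hi
      have := hm i hi
      rwa [hw, cancel] at this
    · have hm (i : ℕ) (hi : i < k) : D * (m ^ (i + 1) * D ^ (k - (i + 1))) ∣ m * l := by
        rw [shift' i hi, cancel]
        exact hlt _ hi
      have hm' (i : ℕ) (hi : i < k) : D * (m ^ i * D ^ (k - i)) ∣ m * l := by
        rcases i with _ | i
        · have := hm (k - 1) (by omega)
          simpa [show k - 1 + 1 = k by omega, h] using this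
        · exact hm i (by omega)
      obtain ⟨w, hw⟩ := dvd_of_mul_right_dvd (hm' 0 (by omega))
      rw [hw, cancel, hl]
      intro i hi
      have := hm' i hi
      rwa [hw, cancel] at this
  exact mul_right_cancel key

theorem map_braidRelWord_eq_one_iff {I H : Type*} [Group H] (φ : FreeGroup I →* H) {i j : I} :
    φ (braidRelWord i j) = 1 ↔
      φ (.of i) * (φ (.of j) * φ (.of i)) = φ (.of j) * (φ (.of i) * φ (.of j)) := by
  rw [braidRelWord, map_mul, map_inv, mul_inv_eq_one]
  simp only [map_mul, mul_assoc]

theorem map_commRelWord_eq_one_iff {I H : Type*} [Group H] (φ : FreeGroup I →* H) {i j : I} :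
    φ (commRelWord i j) = 1 ↔ φ (.of i) * φ (.of j) = φ (.of j) * φ (.of i) := by
  rw [commRelWord, map_mul, map_inv, mul_inv_eq_one, map_mul, map_mul]

/-- The defining relations of the Artin group of a simply laced Coxeter graph. -/
def artinGroupRels {I : Type*} (G : SimpleGraph I) : Set (FreeGroup I) :=
  {r | (∃ i j, G.Adj i j ∧ r = braidRelWord i j) ∨ (∃ i j, ¬ G.Adj i j ∧ r = commRelWord i j)}

/-- The Artin group of a simply laced Coxeter graph. -/
abbrev ArtinGroup {I : Type*} (G : SimpleGraph I) := PresentedGroup (artinGroupRels G)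

namespace ArtinGroup

variable {I : Type*} {G : SimpleGraph I}

/-- The standard generators of the Artin group. -/
def gen (G : SimpleGraph I) (i : I) : ArtinGroup G := PresentedGroup.of i

theorem gen_comm {i j : I} (h : ¬ G.Adj i j) : gen G i * gen G j = gen G j * gen G i :=
  (map_commRelWord_eq_one_iff (PresentedGroup.mk (artinGroupRels G))).1 <|
    PresentedGroup.one_of_mem (Or.inr ⟨i, j, h, rfl⟩)

theorem gen_braid {i j : I} (h : G.Adj i j) :
    gen G i * (gen G j * gen G i) = gen G j * (gen G i * gen G j) :=
  (map_braidRelWord_eq_one_iff (PresentedGroup.mk (artinGroupRels G))).1 <|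
    PresentedGroup.one_of_mem (Or.inl ⟨i, j, h, rfl⟩)

/-- A map on generators satisfying the defining relations extends to the Artin group. -/
def lift {H : Type*} [Group H] (f : I → H) (hc : ∀ i j, ¬ G.Adj i j → f i * f j = f j * f i)
    (hb : ∀ i j, G.Adj i j → f i * (f j * f i) = f j * (f i * f j)) : ArtinGroup G →* H :=
  PresentedGroup.toGroup (f := f) <| by
    rintro _ (⟨i, j, h, rfl⟩ | ⟨i, j, h, rfl⟩)
    · simpa only [map_braidRelWord_eq_one_iff, FreeGroup.lift_apply_of] using hb i j h
    · simpa only [map_commRelWord_eq_one_iff, FreeGroup.lift_apply_of] using hc i j h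

@[simp]
theorem lift_gen {H : Type*} [Group H] (f : I → H)
    (hc : ∀ i j, ¬ G.Adj i j → f i * f j = f j * f i)
    (hb : ∀ i j, G.Adj i j → f i * (f j * f i) = f j * (f i * f j)) (i : I) :
    lift f hc hb (gen G i) = f i := PresentedGroup.toGroup.of _

/-- The canonical homomorphism from the Artin monoid to the Artin group. -/
def ofMonoid (G : SimpleGraph I) : ArtinMonoid G →* ArtinGroup G :=
  ArtinMonoid.lift (gen G) (fun _ _ h => gen_comm h) (fun _ _ h => gen_braid h)

variable {C : ArtinMonoid G}

theorem exists_mul_eq_pow (hC : ∀ x, Commute C x) (hdvd : ∀ i, ArtinMonoid.gen G i ∣ C)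
    (x : ArtinMonoid G) : ∃ y k, x * y = C ^ k := by
  induction hN : x.length generalizing x with
  | zero => exact ⟨1, 0, by simp [ArtinMonoid.eq_one_of_length_eq_zero hN]⟩
  | succ N ih =>
    rcases ArtinMonoid.eq_one_or_eq_gen_mul x with rfl | ⟨a, x, rfl⟩
    · simp at hN
    · obtain ⟨y, k, hy⟩ := ih x (by simp at hN; omega)
      obtain ⟨p, hp⟩ := hdvd a
      refine ⟨y * p, k + 1, ?_⟩
      rw [mul_assoc, ← mul_assoc x, hy, ((hC p).pow_left k).eq, ← mul_assoc, ← hp, pow_succ']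

/-- The Artin monoid embeds into the Artin group if the latter has a central element divisible by
all generators. -/
theorem ofMonoid_injective (hG : ∀ i j k, G.Adj i j → G.Adj j k → ¬ G.Adj i k)
    (hC : ∀ x, Commute C x) (hdvd : ∀ i, ArtinMonoid.gen G i ∣ C) :
    Function.Injective (ofMonoid G) := by
  have := ArtinMonoid.isCancelMul hG
  let : OreLocalization.OreSet (Submonoid.powers C) :=
    { ore_right_cancel := fun r₁ r₂ s h => ⟨1, by rw [mul_right_cancel h]⟩
      oreNum := fun r _ => r
      oreDenom := fun _ s => s
      ore_eq := by
        rintro r ⟨_, k, rfl⟩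
        exact ((hC r).pow_left k).eq }
  let φ : ArtinMonoid G →* OreLocalization (Submonoid.powers C) (ArtinMonoid G) :=
    OreLocalization.numeratorHom
  have hφ : Function.Injective φ := by
    intro x y hxy
    obtain ⟨u, v, h₁, h₂⟩ := OreLocalization.oreDiv_eq_iff.1 hxy
    simp only [OneMemClass.coe_one, mul_one] at h₂
    rw [← h₂, smul_eq_mul, Submonoid.smul_def, smul_eq_mul] at h₁
    exact (mul_left_cancel h₁).symm
  have hunit (i : I) : IsUnit (φ (ArtinMonoid.gen G i)) := by
    obtain ⟨p, hp⟩ := hdvd i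
    have hcomm : Commute (ArtinMonoid.gen G i) p := by
      refine mul_left_cancel (a := ArtinMonoid.gen G i) ?_
      rw [← hp, ← mul_assoc, ← hp, (hC _).eq]
    have : IsUnit (φ C) := OreLocalization.numerator_isUnit ⟨C, Submonoid.mem_powers C⟩
    rw [congrArg φ hp, map_mul, (hcomm.map φ).isUnit_mul_iff] at this
    exact this.1
  let f : ArtinGroup G →* (OreLocalization (Submonoid.powers C) (ArtinMonoid G))ˣ :=
    lift (fun i => (hunit i).unit)
      (fun i j h => Units.ext <| by
        simp only [Units.val_mul, IsUnit.unit_spec, ← map_mul, ArtinMonoid.gen_comm h])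
      (fun i j h => Units.ext <| by
        simp only [Units.val_mul, IsUnit.unit_spec, ← map_mul, ArtinMonoid.gen_braid h])
  have hf : ((Units.coeHom _).comp f).comp (ofMonoid G) = φ :=
    ArtinMonoid.hom_ext fun i => by simp [ofMonoid, f]
  intro x y hxy
  apply hφ
  rw [← hf, MonoidHom.comp_apply, hxy, ← MonoidHom.comp_apply]

theorem exists_mul_pow_eq_ofMonoid (hC : ∀ x, Commute C x)
    (hdvd : ∀ i, ArtinMonoid.gen G i ∣ C) (g : ArtinGroup G) :
    ∃ m j, g * ofMonoid G C ^ j = ofMonoid G m := by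
  have hcentral (i : I) : Commute (ofMonoid G C) (gen G i) :=
    (hC (ArtinMonoid.gen G i)).map (ofMonoid G)
  have hcentral' (g : ArtinGroup G) : Commute (ofMonoid G C) g := by
    induction g using PresentedGroup.induction_on with | _ w
    induction w using FreeGroup.induction_on with
    | C1 => simp
    | of i => exact hcentral i
    | inv_of i h => rw [map_inv]; exact h.inv_right
    | mul x y hx hy => rw [map_mul]; exact hx.mul_right hy
  induction g using PresentedGroup.induction_on with | _ w
  induction w using FreeGroup.induction_on with
  | C1 => exact ⟨1, 0, by simp⟩
  | of i => exact ⟨ArtinMonoid.gen G i, 0, by simp; rfl⟩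
  | inv_of i h =>
    obtain ⟨p, hp⟩ := hdvd i
    refine ⟨p, 1, ?_⟩
    rw [hp, map_mul, pow_one, map_inv, inv_mul_eq_iff_eq_mul]
    rfl
  | mul x y hx hy =>
    obtain ⟨a, j, ha⟩ := hx
    obtain ⟨b, l, hb⟩ := hy
    refine ⟨a * b, j + l, ?_⟩
    rw [map_mul, map_mul, ← ha, ← hb, pow_add, mul_assoc, mul_assoc, ← mul_assoc _ (_ ^ j),
      ← ((hcentral' _).pow_left j).eq, mul_assoc]

theorem eq_one_of_pow_eq_one (hG : ∀ i j k, G.Adj i j → G.Adj j k → ¬ G.Adj i k)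
    (hC : ∀ x, Commute C x) (hdvd : ∀ i, ArtinMonoid.gen G i ∣ C) {g : ArtinGroup G} {k : ℕ}
    (hk : 1 ≤ k) (h : g ^ k = 1) : g = 1 := by
  have := ArtinMonoid.isCancelMul hG
  obtain ⟨m, j, hm⟩ := exists_mul_pow_eq_ofMonoid hC hdvd g
  have hcomm : Commute (ofMonoid G C ^ j) g := by
    have h₁ : Commute (ofMonoid G C ^ j) (g * ofMonoid G C ^ j) := by
      rw [hm, ← map_pow]
      exact ((hC m).pow_left j).map (ofMonoid G)
    simpa using h₁.mul_right (Commute.refl (ofMonoid G C ^ j)).inv_right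
  have hpow : m ^ k = (C ^ j) ^ k := by
    apply ofMonoid_injective hG hC hdvd
    rw [map_pow, ← hm, hcomm.symm.mul_pow, h, one_mul, map_pow, map_pow]
  have hlcm (x y : ArtinMonoid G) : ∃ l, ∀ w, l ∣ w ↔ x ∣ w ∧ y ∣ w := by
    obtain ⟨x', a, hx⟩ := exists_mul_eq_pow hC hdvd x
    obtain ⟨y', b, hy⟩ := exists_mul_eq_pow hC hdvd y
    refine ArtinMonoid.exists_lcm hG (z := C ^ (a + b)) ?_ ?_
    · rw [pow_add, ← hx, mul_assoc]; exact Dvd.intro _ rfl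
    · rw [add_comm, pow_add, ← hy, mul_assoc]; exact Dvd.intro _ rfl
  have hmD := eq_of_pow_eq_pow_of_lcm (fun _ _ => ArtinMonoid.eq_one_of_mul_eq_one) hlcm
    ((hC m).pow_left j) hk hpow
  rw [hmD, map_pow] at hm
  exact mul_eq_right.1 hm

end ArtinGroup

/-- The sequence `s 0, …, s (m - 1)` satisfies the braid relations. -/
structure IsBraidSequence {M : Type*} [Monoid M] (m : ℕ) (s : ℕ → M) : Prop where
  braid : ∀ i, i + 1 < m → s i * (s (i + 1) * s i) = s (i + 1) * (s i * s (i + 1))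
  comm : ∀ i j, i + 2 ≤ j → j < m → s i * s j = s j * s i

/-- The product `s 0 * s 1 * ⋯ * s (k - 1)`. -/
def seqProd {M : Type*} [Monoid M] (s : ℕ → M) : ℕ → M
  | 0 => 1
  | k + 1 => seqProd s k * s k

theorem seqProd_succ' {M : Type*} [Monoid M] (s : ℕ → M) (k : ℕ) :
    seqProd s (k + 1) = s 0 * seqProd (fun i => s (i + 1)) k := by
  induction k with
  | zero => simp [seqProd]
  | succ k ih => rw [seqProd, ih, seqProd, mul_assoc]

theorem commute_seqProd {M : Type*} [Monoid M] {s : ℕ → M} {x : M} {k : ℕ}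
    (h : ∀ i < k, Commute x (s i)) : Commute x (seqProd s k) := by
  induction k with
  | zero => exact Commute.one_right x
  | succ k ih => exact (ih fun i hi => h i (by omega)).mul_right (h k (by omega))

theorem seqProd_congr {M : Type*} [Monoid M] {s t : ℕ → M} {k : ℕ}
    (h : ∀ i < k, s i = t i) : seqProd s k = seqProd t k := by
  induction k with
  | zero => rfl
  | succ k ih => rw [seqProd, seqProd, ih fun i hi => h i (by omega), h k (by omega)]

theorem map_seqProd {M N : Type*} [Monoid M] [Monoid N] (f : M →* N) (s : ℕ → M) (k : ℕ) :
    f (seqProd s k) = seqProd (fun i => f (s i)) k := by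
  induction k with
  | zero => simp [seqProd]
  | succ k ih => simp [seqProd, ih]

namespace IsBraidSequence

variable {M : Type*} [Monoid M] {m : ℕ} {s : ℕ → M}

theorem seqProd_mul (h : IsBraidSequence m s) {i k : ℕ} (hi : i + 1 < k) (hk : k ≤ m) :
    seqProd s k * s i = s (i + 1) * seqProd s k := by
  induction k with
  | zero => omega
  | succ k ih =>
    rcases Nat.lt_or_ge (i + 1) k with hik | hik
    · rw [seqProd, mul_assoc, ← h.comm i k (by omega) (by omega), ← mul_assoc,
        ih hik (by omega), mul_assoc]
    · obtain rfl : k = i + 1 := by omega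
      have : Commute (s (i + 1)) (seqProd s i) :=
        commute_seqProd fun j hj => (h.comm j (i + 1) (by omega) (by omega)).symm
      rw [seqProd, seqProd, mul_assoc, mul_assoc, h.braid i (by omega), ← mul_assoc, ← this.eq]
      simp only [mul_assoc]

theorem seqProd_shift_mul (h : IsBraidSequence m s) {j k : ℕ} (hj : j < k) (hk : k ≤ m) :
    seqProd (fun i => s (i + 1)) j * seqProd s k = seqProd s k * seqProd s j := by
  induction j with
  | zero => simp [seqProd]
  | succ j ih =>
    rw [seqProd, seqProd, mul_assoc, ← h.seqProd_mul hj hk, ← mul_assoc, ih (by omega), mul_assoc]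

variable {k : ℕ}

theorem seqProd_sq_mul_last (h : IsBraidSequence (k + 1) s) :
    seqProd s (k + 1) ^ 2 * s k = s 0 * seqProd s (k + 1) ^ 2 := by
  have h₁ : seqProd s (k + 1) ^ 2 = s 0 * (seqProd s (k + 1) * seqProd s k) := by
    rw [← h.seqProd_shift_mul (Nat.lt_succ_self k) le_rfl, ← mul_assoc, ← seqProd_succ', pow_two]
  nth_rewrite 1 [h₁]
  rw [mul_assoc, mul_assoc, ← seqProd.eq_2, pow_two]

theorem seqProd_pow_mul (h : IsBraidSequence (k + 1) s) {i j : ℕ} (hij : i + j < k + 1) :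
    seqProd s (k + 1) ^ j * s i = s (i + j) * seqProd s (k + 1) ^ j := by
  induction j with
  | zero => simp
  | succ j ih =>
    rw [pow_succ', mul_assoc, ih (by omega), ← mul_assoc, h.seqProd_mul (by omega) le_rfl,
      mul_assoc, add_assoc]

theorem commute_seqProd_pow (h : IsBraidSequence (k + 1) s) {i : ℕ} (hi : i < k + 1) :
    Commute (seqProd s (k + 1) ^ (k + 2)) (s i) := by
  obtain ⟨j, rfl⟩ : ∃ j, k = i + j := ⟨k - i, by omega⟩
  have h₀ := h.seqProd_pow_mul (i := 0) (j := i) (by omega)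
  rw [zero_add] at h₀
  rw [Commute, SemiconjBy, show i + j + 2 = i + 2 + j by omega, pow_add, pow_add, mul_assoc,
    h.seqProd_pow_mul (by omega), mul_assoc, ← mul_assoc _ (s _), h.seqProd_sq_mul_last,
    mul_assoc, ← mul_assoc, h₀]
  simp only [mul_assoc]

theorem dvd_seqProd_pow (h : IsBraidSequence (k + 1) s) {i : ℕ} (hi : i < k + 1) :
    s i ∣ seqProd s (k + 1) ^ (k + 2) := by
  have h₀ := h.seqProd_pow_mul (i := 0) (j := i) (by omega)
  obtain ⟨j, hj⟩ : ∃ j, k + 2 = i + 1 + j := ⟨k + 1 - i, by omega⟩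
  rw [zero_add] at h₀
  rw [hj, pow_add, pow_succ]
  nth_rewrite 2 [seqProd_succ']
  rw [← mul_assoc, h₀, mul_assoc, mul_assoc]
  exact Dvd.intro _ rfl

end IsBraidSequence

/-- The braid group on `m + 1` strands. -/
abbrev BraidGroup (m : ℕ) := ArtinGroup (SimpleGraph.pathGraph m)

theorem IsBraidSequence.mul_comm_of_not_adj {M : Type*} [Monoid M] {m : ℕ} {s : ℕ → M}
    (h : IsBraidSequence m s) {i j : Fin m} (hij : ¬ (SimpleGraph.pathGraph m).Adj i j) :
    s i * s j = s j * s i := by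
  rw [SimpleGraph.pathGraph_adj] at hij
  rcases lt_trichotomy i.val j.val with hlt | heq | hlt
  · exact h.comm i j (by omega) j.2
  · rw [heq]
  · exact (h.comm j i (by omega) i.2).symm

theorem IsBraidSequence.braid_of_adj {M : Type*} [Monoid M] {m : ℕ} {s : ℕ → M}
    (h : IsBraidSequence m s) {i j : Fin m} (hij : (SimpleGraph.pathGraph m).Adj i j) :
    s i * (s j * s i) = s j * (s i * s j) := by
  rw [SimpleGraph.pathGraph_adj] at hij
  rcases hij with hij | hij
  · rw [← hij]
    exact h.braid i (by omega)
  · rw [← hij]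
    exact (h.braid j (by omega)).symm

/-- The extension of a family indexed by `Fin m` by `1`. -/
def extendByOne {M : Type*} [Monoid M] {m : ℕ} (f : Fin m → M) (i : ℕ) : M :=
  if h : i < m then f ⟨i, h⟩ else 1

theorem extendByOne_val {M : Type*} [Monoid M] {m : ℕ} (f : Fin m → M) (i : Fin m) :
    extendByOne f i = f i := by
  simp [extendByOne]

theorem isBraidSequence_extendByOne {M : Type*} [Monoid M] {m : ℕ} {f : Fin m → M}
    (hc : ∀ i j, ¬ (SimpleGraph.pathGraph m).Adj i j → f i * f j = f j * f i)
    (hb : ∀ i j, (SimpleGraph.pathGraph m).Adj i j → f i * (f j * f i) = f j * (f i * f j)) :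
    IsBraidSequence m (extendByOne f) where
  braid i hi := by
    have hi' : i < m := by omega
    simp only [extendByOne, hi, hi', dite_true]
    exact hb _ _ (SimpleGraph.pathGraph_adj.2 (.inl rfl))
  comm i j hij hj := by
    have hi' : i < m := by omega
    simp only [extendByOne, hj, hi', dite_true]
    refine hc _ _ fun h => ?_
    rw [SimpleGraph.pathGraph_adj] at h
    simp only at h
    omega

namespace BraidGroup

theorem eq_one_of_pow_eq_one {m : ℕ} {g : BraidGroup (m + 1)} {k : ℕ} (hk : 1 ≤ k)
    (h : g ^ k = 1) : g = 1 := by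
  let s := extendByOne (ArtinMonoid.gen (SimpleGraph.pathGraph (m + 1)))
  have hs : IsBraidSequence (m + 1) s :=
    isBraidSequence_extendByOne (fun _ _ h => ArtinMonoid.gen_comm h)
      (fun _ _ h => ArtinMonoid.gen_braid h)
  refine ArtinGroup.eq_one_of_pow_eq_one (C := seqProd s (m + 1) ^ (m + 2)) ?_ ?_ ?_ hk h
  · intro i j k hij hjk hik
    rw [SimpleGraph.pathGraph_adj] at hij hjk hik
    omega
  · intro x
    induction hN : x.length generalizing x with
    | zero => rw [ArtinMonoid.eq_one_of_length_eq_zero hN]; exact Commute.one_right _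
    | succ N ih =>
      rcases ArtinMonoid.eq_one_or_eq_gen_mul x with rfl | ⟨a, x, rfl⟩
      · exact Commute.one_right _
      · refine Commute.mul_right ?_ (ih x (by simp at hN; omega))
        rw [← extendByOne_val (ArtinMonoid.gen _) a]
        exact hs.commute_seqProd_pow a.2
  · intro i
    rw [← extendByOne_val (ArtinMonoid.gen _) i]
    exact hs.dvd_seqProd_pow i.2

/-- The standard generators of the braid group, indexed by natural numbers. -/
def gen (m : ℕ) : ℕ → BraidGroup m := extendByOne (ArtinGroup.gen _)

theorem isBraidSequence_gen (m : ℕ) : IsBraidSequence m (gen m) :=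
  isBraidSequence_extendByOne (fun _ _ h => ArtinGroup.gen_comm h)
    (fun _ _ h => ArtinGroup.gen_braid h)

/-- The homomorphism from the braid group determined by a braid sequence. -/
def lift {H : Type*} [Group H] {m : ℕ} {s : ℕ → H} (h : IsBraidSequence m s) :
    BraidGroup m →* H :=
  ArtinGroup.lift (fun i => s i) (fun _ _ h' => h.mul_comm_of_not_adj h')
    (fun _ _ h' => h.braid_of_adj h')

theorem lift_gen {H : Type*} [Group H] {m : ℕ} {s : ℕ → H} (h : IsBraidSequence m s) {i : ℕ}
    (hi : i < m) : lift h (gen m i) = s i := by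
  simp [gen, extendByOne, hi, lift]

@[elab_as_elim]
theorem induction_on {m : ℕ} {p : BraidGroup m → Prop} (b : BraidGroup m) (one : p 1)
    (of : ∀ i < m, p (gen m i)) (inv : ∀ x, p x → p x⁻¹)
    (mul : ∀ x y, p x → p y → p (x * y)) : p b := by
  induction b using PresentedGroup.induction_on with | _ w
  have hof (i : Fin m) : p (PresentedGroup.mk _ (FreeGroup.of i)) := by
    have := of i i.2
    rwa [gen, extendByOne_val] at this
  induction w using FreeGroup.induction_on with
  | C1 => rwa [map_one]
  | of i => exact hof i
  | inv_of i h => rw [map_inv]; exact inv _ h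
  | mul x y hx hy => rw [map_mul]; exact mul _ _ hx hy

end BraidGroup

/-- The homomorphism underlying Artin's action of the `i`-th braid generator on a free group. -/
def artinHom (i : ℕ) : FreeGroup ℕ →* FreeGroup ℕ :=
  FreeGroup.lift fun j =>
    if j = i then (.of i)⁻¹ * .of (i + 1) * .of i else if j = i + 1 then .of i else .of j

/-- The inverse of `artinHom`. -/
def artinInvHom (i : ℕ) : FreeGroup ℕ →* FreeGroup ℕ :=
  FreeGroup.lift fun j =>
    if j = i then .of (i + 1)
    else if j = i + 1 then .of (i + 1) * .of i * (.of (i + 1))⁻¹ else .of j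

/-- The automorphism by which the `i`-th braid generator acts on a free group. -/
def artinAut (i : ℕ) : MulAut (FreeGroup ℕ) :=
  MonoidHom.toMulEquiv (artinHom i) (artinInvHom i)
    (by
      ext j
      by_cases h₁ : j = i
      · subst h₁; simp [artinHom, artinInvHom, mul_assoc]
      · by_cases h₂ : j = i + 1
        · subst h₂; simp [artinHom, artinInvHom]
        · simp [artinHom, artinInvHom, h₁, h₂])
    (by
      ext j
      by_cases h₁ : j = i
      · subst h₁; simp [artinHom, artinInvHom]
      · by_cases h₂ : j = i + 1
        · subst h₂; simp [artinHom, artinInvHom, mul_assoc]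
        · simp [artinHom, artinInvHom, h₁, h₂])

theorem artinAut_self (i : ℕ) :
    artinAut i (.of i) = (.of i)⁻¹ * .of (i + 1) * .of i := by
  simp [artinAut, artinHom]

theorem artinAut_succ (i : ℕ) : artinAut i (.of (i + 1)) = .of i := by
  simp [artinAut, artinHom]

theorem artinAut_of_ne {i j : ℕ} (h₁ : j ≠ i) (h₂ : j ≠ i + 1) :
    artinAut i (.of j) = .of j := by
  simp [artinAut, artinHom, h₁, h₂]

theorem mulAut_freeGroup_ext {α : Type*} {f g : MulAut (FreeGroup α)}
    (h : ∀ a, f (.of a) = g (.of a)) : f = g := by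
  have : f.toMonoidHom = g.toMonoidHom := FreeGroup.ext_hom _ _ h
  exact MulEquiv.ext fun x => DFunLike.congr_fun this x

theorem isBraidSequence_artinAut (m : ℕ) : IsBraidSequence m artinAut where
  braid i _ := by
    refine mulAut_freeGroup_ext fun j => ?_
    simp only [MulAut.mul_apply]
    have e₁ : artinAut (i + 1) (.of i) = .of i := artinAut_of_ne (by omega) (by omega)
    have e₂ : artinAut i (.of (i + 1 + 1)) = .of (i + 1 + 1) :=
      artinAut_of_ne (by omega) (by omega)
    by_cases h₀ : j = i
    · subst h₀
      simp [artinAut_self, artinAut_succ, e₁, e₂, mul_assoc]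
    by_cases h₁ : j = i + 1
    · subst h₁
      simp [artinAut_self, artinAut_succ, e₁, e₂]
    by_cases h₂ : j = i + 1 + 1
    · subst h₂
      simp [artinAut_succ, e₁, e₂]
    simp [artinAut_of_ne, h₀, h₁, h₂]
  comm i l hil _ := by
    refine mulAut_freeGroup_ext fun j => ?_
    simp only [MulAut.mul_apply]
    by_cases h₀ : j = i
    · subst h₀
      rw [artinAut_of_ne (i := l) (by omega) (by omega), artinAut_self, map_mul, map_mul, map_inv,
        artinAut_of_ne (i := l) (by omega) (by omega),
        artinAut_of_ne (i := l) (by omega) (by omega)]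
    by_cases h₁ : j = i + 1
    · subst h₁
      rw [artinAut_of_ne (i := l) (by omega) (by omega), artinAut_succ,
        artinAut_of_ne (i := l) (by omega) (by omega)]
    by_cases h₂ : j = l
    · subst h₂
      rw [artinAut_of_ne (i := i) (by omega) (by omega), artinAut_self, map_mul, map_mul, map_inv,
        artinAut_of_ne (i := i) (by omega) (by omega),
        artinAut_of_ne (i := i) (by omega) (by omega)]
    by_cases h₃ : j = l + 1
    · subst h₃
      rw [artinAut_of_ne (i := i) (by omega) (by omega), artinAut_succ,
        artinAut_of_ne (i := i) (by omega) (by omega)]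
    rw [artinAut_of_ne h₀ h₁, artinAut_of_ne h₂ h₃, artinAut_of_ne h₀ h₁]

/-- Artin's action of the braid group on a free group. -/
def artinAction (m : ℕ) : BraidGroup m →* MulAut (FreeGroup ℕ) :=
  BraidGroup.lift (isBraidSequence_artinAut m)

theorem artinAction_gen {m i : ℕ} (hi : i < m) :
    artinAction m (BraidGroup.gen m i) = artinAut i :=
  BraidGroup.lift_gen _ hi

theorem SemidirectProduct.eq_one_of_pow_eq_one {N Q : Type*} [Group N] [Group Q]
    {φ : Q →* MulAut N} {k : ℕ} (hN : ∀ x : N, x ^ k = 1 → x = 1)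
    (hQ : ∀ x : Q, x ^ k = 1 → x = 1) {x : N ⋊[φ] Q} (h : x ^ k = 1) : x = 1 := by
  have hr : x.right = 1 := hQ _ <| by
    have := congrArg SemidirectProduct.rightHom h
    rwa [map_pow, map_one] at this
  have hx : x = SemidirectProduct.inl x.left := by ext <;> simp [hr]
  rw [hx, ← map_pow, ← map_one SemidirectProduct.inl] at h
  rw [hx, hN _ (SemidirectProduct.inl_injective h), map_one]

theorem FreeGroup.eq_one_of_pow_eq_one {α : Type*} {k : ℕ} (hk : 1 ≤ k) (x : FreeGroup α)
    (h : x ^ k = 1) : x = 1 :=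
  (pow_eq_one_iff_left (by omega)).1 h

/-- The sequence `s 0, …, s (m - 1)` together with `x` satisfies the relations of the annular
braid group, that is, of the Artin group of type `B`. -/
structure IsAnnularSequence {M : Type*} [Monoid M] (m : ℕ) (s : ℕ → M) (x : M) : Prop
    extends IsBraidSequence m s where
  comm_succ : ∀ i, i + 1 < m → Commute x (s (i + 1))
  four : s 0 * (x * (s 0 * x)) = x * (s 0 * (x * s 0))

/-- Conjugation by `t` shifts the sequence `s 0, …, s k`, and conjugation by `t ^ 2` sends
`s k` to `s 0`. -/
structure IsRotation {M : Type*} [Monoid M] (k : ℕ) (s : ℕ → M) (t : M) : Prop where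
  mul_succ : ∀ i < k, t * s i = s (i + 1) * t
  sq_mul_last : t ^ 2 * s k = s 0 * t ^ 2

section

variable {G : Type*} [Group G] {k m : ℕ} {s : ℕ → G} {x t : G}

theorem IsAnnularSequence.isRotation (h : IsAnnularSequence (k + 1) s x) :
    IsRotation k s (x * seqProd s (k + 1)) where
  mul_succ i hi := by
    rw [mul_assoc, h.seqProd_mul (by omega) le_rfl, ← mul_assoc, (h.comm_succ i (by omega)).eq,
      mul_assoc]
  sq_mul_last := by
    have hx : Commute x (seqProd (fun i => s (i + 1)) k) :=
      commute_seqProd fun i hi => h.comm_succ i (by omega)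
    have hsq : (x * seqProd s (k + 1)) ^ 2 =
        x * (s 0 * (x * (s 0)⁻¹)) * seqProd s (k + 1) ^ 2 := by
      have e : seqProd (fun i => s (i + 1)) k = (s 0)⁻¹ * seqProd s (k + 1) := by
        rw [seqProd_succ', inv_mul_cancel_left]
      rw [e] at hx
      have h₂ : seqProd s (k + 1) * x = s 0 * (x * (s 0)⁻¹) * seqProd s (k + 1) := by
        rw [mul_assoc, mul_assoc, hx.eq, mul_assoc, mul_inv_cancel_left]
      rw [pow_two, mul_assoc, ← mul_assoc _ x, h₂, pow_two]
      simp only [mul_assoc]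
    have h₀ : s 0 * (x * (s 0 * (x * (s 0)⁻¹))) = x * (s 0 * (x * (s 0)⁻¹)) * s 0 := by
      have := congrArg (· * (s 0)⁻¹) h.four
      simpa [mul_assoc] using this
    rw [hsq, mul_assoc, h.seqProd_sq_mul_last, ← mul_assoc, ← h₀, mul_assoc]

theorem IsRotation.mul_seqProd (ht : IsRotation k s t) {j : ℕ} (hj : j ≤ k) :
    t * seqProd s j = seqProd (fun i => s (i + 1)) j * t := by
  induction j with
  | zero => simp [seqProd]
  | succ j ih =>
    rw [seqProd, ← mul_assoc, ih (by omega), mul_assoc, ht.mul_succ j hj, ← mul_assoc, seqProd]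

theorem IsRotation.isAnnularSequence (ht : IsRotation k s t) (h : IsBraidSequence (k + 1) s) :
    IsAnnularSequence (k + 1) s (t * (seqProd s (k + 1))⁻¹) where
  toIsBraidSequence := h
  comm_succ i hi := by
    have hδ : SemiconjBy (seqProd s (k + 1)) (s i) (s (i + 1)) := h.seqProd_mul hi le_rfl
    exact SemiconjBy.mul_left (ht.mul_succ i (by omega)) hδ.inv_symm_left
  four := by
    set P := seqProd s k with hP
    set P' := seqProd (fun i => s (i + 1)) k with hP'
    have hδ : seqProd s (k + 1) = P * s k := seqProd.eq_2 s k
    have hδ' : seqProd s (k + 1) = s 0 * P' := seqProd_succ' s k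
    have hPP : SemiconjBy (P' * P) (s k) (s 0) := by
      have := h.seqProd_shift_mul (Nat.lt_succ_self k) le_rfl
      rw [SemiconjBy, mul_assoc, ← hδ, this, hδ', mul_assoc]
    have htP : SemiconjBy t P P' := ht.mul_seqProd le_rfl
    have hcomm : Commute (t ^ 2 * (P' * P)⁻¹) (s 0) :=
      SemiconjBy.mul_left ht.sq_mul_last hPP.inv_symm_left
    have hx : t * (seqProd s (k + 1))⁻¹ = t * P'⁻¹ * (s 0)⁻¹ := by
      rw [hδ', mul_inv_rev, mul_assoc]
    have hsq : t ^ 2 * (P' * P)⁻¹ = t * P'⁻¹ * (t * P'⁻¹) := by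
      rw [pow_two, mul_inv_rev, mul_assoc, mul_assoc, ← mul_assoc t P⁻¹,
        htP.inv_right.eq, mul_assoc]
    rw [hsq] at hcomm
    rw [hx]
    generalize t * P'⁻¹ = w at hcomm
    simp only [mul_assoc, inv_mul_cancel_left, inv_mul_cancel, mul_one]
    rw [← mul_assoc w w, ← mul_assoc, ← hcomm.eq, mul_inv_cancel_right]

/-- The conjugates `x, (s 0)⁻¹ * x * s 0, …` of `x`, extended by `1`. -/
def conjSeq (m : ℕ) (s : ℕ → G) (x : G) : ℕ → G
  | 0 => x
  | j + 1 => if j < m then (s j)⁻¹ * conjSeq m s x j * s j else 1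

theorem mul_conjSeq_succ {i : ℕ} (hi : i < m) :
    s i * conjSeq m s x (i + 1) = conjSeq m s x i * s i := by
  simp [conjSeq, hi, ← mul_assoc]

namespace IsAnnularSequence

theorem commute_conjSeq_of_lt (h : IsAnnularSequence m s x) {i j : ℕ} (hi : i < m) (hj : j < i) :
    Commute (s i) (conjSeq m s x j) := by
  induction j with
  | zero =>
    obtain ⟨i, rfl⟩ : ∃ l, i = l + 1 := ⟨i - 1, by omega⟩
    exact (h.comm_succ i hi).symm
  | succ j ih =>
    rw [conjSeq, if_pos (by omega)]
    have hc : Commute (s i) (s j) := (h.comm j i (by omega) hi).symm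
    exact (hc.inv_right.mul_right (ih (by omega))).mul_right hc

theorem commute_conjSeq_add_two (h : IsAnnularSequence m s x) {i : ℕ} (hi : i + 1 < m) :
    Commute (s i) (conjSeq m s x (i + 2)) := by
  have hc : s (i + 1) * conjSeq m s x i = conjSeq m s x i * s (i + 1) :=
    h.commute_conjSeq_of_lt hi (Nat.lt_succ_self i)
  have h₁ := mul_conjSeq_succ (s := s) (x := x) (m := m) (i := i) (by omega)
  have h₂ := mul_conjSeq_succ (s := s) (x := x) (m := m) (i := i + 1) hi
  have hb := h.braid i hi
  refine mul_left_cancel (a := s i * s (i + 1)) ?_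
  have e (y : G) : s i * (s (i + 1) * (conjSeq m s x (i + 2) * y)) =
      conjSeq m s x i * (s i * (s (i + 1) * y)) := by
    rw [← mul_assoc (s (i + 1)), h₂, mul_assoc, ← mul_assoc, h₁, mul_assoc]
  calc s i * s (i + 1) * (s i * conjSeq m s x (i + 2))
      = s (i + 1) * (s i * (s (i + 1) * (conjSeq m s x (i + 2) * 1))) := by
        rw [mul_one, mul_assoc, ← mul_assoc (s (i + 1)), ← mul_assoc, hb]
        simp only [mul_assoc]
    _ = conjSeq m s x i * (s i * (s (i + 1) * s i)) := by
        rw [e, ← mul_assoc, hc, hb, mul_one, mul_assoc]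
    _ = s i * s (i + 1) * (conjSeq m s x (i + 2) * s i) := by rw [← e, mul_assoc]

theorem commute_conjSeq_of_gt (h : IsAnnularSequence m s x) {i j : ℕ} (hj : i + 2 ≤ j) :
    Commute (s i) (conjSeq m s x j) := by
  induction j, hj using Nat.le_induction with
  | base =>
    by_cases hm : i + 1 < m
    · exact h.commute_conjSeq_add_two hm
    · rw [conjSeq, if_neg hm]
      exact Commute.one_right _
  | succ j hj ih =>
    rw [conjSeq]
    split_ifs with hm
    · have hc : Commute (s i) (s j) := h.comm i j hj hm
      exact (hc.inv_right.mul_right ih).mul_right hc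
    · exact Commute.one_right _

theorem conjSeq_four (h : IsAnnularSequence m s x) {i : ℕ} (hi : i < m) :
    s i * (conjSeq m s x i * (s i * conjSeq m s x i)) =
      conjSeq m s x i * (s i * (conjSeq m s x i * s i)) := by
  induction i with
  | zero => exact h.four
  | succ i ih =>
    have hs : MulAut.conj ((s i)⁻¹ * (s (i + 1))⁻¹) (s i) = s (i + 1) := by
      have hb := h.braid i hi
      rw [MulAut.conj_apply, mul_inv_rev, inv_inv, inv_inv, mul_assoc, mul_assoc,
        inv_mul_eq_iff_eq_mul, inv_mul_eq_iff_eq_mul, ← hb]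
    have hx : MulAut.conj ((s i)⁻¹ * (s (i + 1))⁻¹) (conjSeq m s x i) =
        conjSeq m s x (i + 1) := by
      have hc := (h.commute_conjSeq_of_lt hi (Nat.lt_succ_self i)).eq
      rw [conjSeq, if_pos (by omega), MulAut.conj_apply, mul_inv_rev, inv_inv, inv_inv]
      simp only [mul_assoc]
      rw [← mul_assoc (conjSeq m s x i), ← hc]
      simp [mul_assoc]
    generalize MulAut.conj ((s i)⁻¹ * (s (i + 1))⁻¹) = c at hs hx
    have := congrArg c (ih (by omega))
    simpa only [map_mul, hs, hx] using this

theorem conj_conjSeq_self (h : IsAnnularSequence m s x) {i : ℕ} (hi : i < m) :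
    s i * conjSeq m s x i * (s i)⁻¹ =
      (conjSeq m s x i)⁻¹ * conjSeq m s x (i + 1) * conjSeq m s x i := by
  have := h.conjSeq_four hi
  rw [mul_inv_eq_iff_eq_mul, mul_assoc, mul_assoc, eq_inv_mul_iff_mul_eq,
    ← mul_right_inj (s i), ← mul_assoc (s i) (conjSeq m s x (i + 1)), mul_conjSeq_succ hi]
  simpa only [mul_assoc] using this

end IsAnnularSequence

end

/-- The annular braid group on `m + 1` strands, as a semidirect product. -/
abbrev AnnularBraidGroup (m : ℕ) := FreeGroup ℕ ⋊[artinAction m] BraidGroup m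

namespace AnnularBraidGroup

open SemidirectProduct

/-- The braid generators of the annular braid group. -/
def gen (m i : ℕ) : AnnularBraidGroup m := inr (BraidGroup.gen m i)

/-- The pure generator of the annular braid group. -/
def loop (m : ℕ) : AnnularBraidGroup m := inl (.of 0)

theorem gen_mul_inl {m i : ℕ} (hi : i < m) (y : FreeGroup ℕ) :
    gen m i * inl y = inl (artinAut i y) * gen m i := by
  rw [← artinAction_gen hi, inl_aut, map_inv, gen, inv_mul_cancel_right]

theorem isAnnularSequence_gen (m : ℕ) :
    IsAnnularSequence (m + 1) (gen (m + 1)) (loop (m + 1)) where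
  braid i hi := by
    simp only [gen, ← map_mul, (BraidGroup.isBraidSequence_gen (m + 1)).braid i hi]
  comm i j hij hj := by
    simp only [gen, ← map_mul, (BraidGroup.isBraidSequence_gen (m + 1)).comm i j hij hj]
  comm_succ i hi := by
    have := gen_mul_inl hi (.of 0)
    rw [artinAut_of_ne (by omega) (by omega)] at this
    exact this.symm
  four := by
    have h₀ := gen_mul_inl (Nat.succ_pos m) (.of 0)
    have h₁ := gen_mul_inl (Nat.succ_pos m) (.of 1)
    rw [artinAut_self, map_mul, map_mul, map_inv, mul_assoc, mul_assoc,
      eq_inv_mul_iff_mul_eq] at h₀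
    rw [artinAut_succ 0] at h₁
    rw [loop, h₀, ← mul_assoc, h₁, mul_assoc]

theorem eq_one_of_pow_eq_one {m : ℕ} {g : AnnularBraidGroup (m + 1)} {k : ℕ} (hk : 1 ≤ k)
    (h : g ^ k = 1) : g = 1 :=
  SemidirectProduct.eq_one_of_pow_eq_one (FreeGroup.eq_one_of_pow_eq_one hk)
    (fun _ => BraidGroup.eq_one_of_pow_eq_one hk) h

variable {G : Type*} [Group G] {m : ℕ} {s : ℕ → G} {x : G}

theorem lift_artinAction (h : IsAnnularSequence m s x) (b : BraidGroup m) (y : FreeGroup ℕ) :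
    FreeGroup.lift (conjSeq m s x) (artinAction m b y) =
      BraidGroup.lift h.toIsBraidSequence b * FreeGroup.lift (conjSeq m s x) y *
        (BraidGroup.lift h.toIsBraidSequence b)⁻¹ := by
  induction b using BraidGroup.induction_on generalizing y with
  | one => simp
  | of i hi =>
    rw [artinAction_gen hi, BraidGroup.lift_gen _ hi]
    have : (FreeGroup.lift (conjSeq m s x)).comp (artinAut i).toMonoidHom =
        (MulAut.conj (s i)).toMonoidHom.comp (FreeGroup.lift (conjSeq m s x)) := by
      ext j
      by_cases h₀ : j = i
      · subst h₀
        simp [artinAut_self, h.conj_conjSeq_self hi]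
      by_cases h₁ : j = i + 1
      · subst h₁
        simp [artinAut_succ, mul_conjSeq_succ hi]
      have hc : Commute (s i) (conjSeq m s x j) := by
        rcases lt_or_ge j i with hj | hj
        · exact h.commute_conjSeq_of_lt hi hj
        · exact h.commute_conjSeq_of_gt (by omega)
      simp [artinAut_of_ne h₀ h₁, hc.eq]
    exact DFunLike.congr_fun this y
  | inv b ih =>
    have := ih (artinAction m b⁻¹ y)
    rw [← MulAut.mul_apply, ← map_mul, mul_inv_cancel, map_one, MulAut.one_apply] at this
    rw [this, map_inv]
    simp [mul_assoc]
  | mul a b iha ihb =>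
    rw [map_mul, MulAut.mul_apply, iha, ihb, map_mul, mul_inv_rev]
    simp only [mul_assoc]

/-- The homomorphism from the annular braid group determined by an annular sequence. -/
def lift (h : IsAnnularSequence m s x) : AnnularBraidGroup m →* G :=
  SemidirectProduct.lift (FreeGroup.lift (conjSeq m s x)) (BraidGroup.lift h.toIsBraidSequence)
    fun b => MonoidHom.ext fun y => lift_artinAction h b y

theorem lift_gen (h : IsAnnularSequence m s x) {i : ℕ} (hi : i < m) : lift h (gen m i) = s i := by
  rw [lift, gen, SemidirectProduct.lift_inr, BraidGroup.lift_gen _ hi]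

theorem lift_loop (h : IsAnnularSequence m s x) : lift h (loop m) = x := by
  rw [lift, loop, SemidirectProduct.lift_inl, FreeGroup.lift_apply_of, conjSeq]

end AnnularBraidGroup

section

variable {G : Type*} [Group G] {k : ℕ} {s : ℕ → G} {t : G}

theorem IsRotation.pow_mul (ht : IsRotation k s t) {j : ℕ} (hj : j ≤ k) :
    t ^ j * s 0 = s j * t ^ j := by
  induction j with
  | zero => simp
  | succ j ih =>
    rw [pow_succ', mul_assoc, ih (by omega), ← mul_assoc, ht.mul_succ j hj, mul_assoc]

theorem IsRotation.commute_pow (ht : IsRotation k s t) : Commute (t ^ (k + 2)) (s 0) := by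
  rw [Commute, SemiconjBy, add_comm, pow_add, mul_assoc, ht.pow_mul le_rfl, ← mul_assoc,
    ht.sq_mul_last, mul_assoc]

/-- The conjugates of `s` by the powers of `t`, indexed by residues modulo `n`. -/
def cyclicConj (n : ℕ) (s t : G) (i : ZMod n) : G :=
  MulAut.conj (t ^ (i.cast : ℤ)) s

theorem cyclicConj_intCast {n : ℕ} {s t : G} (h : Commute (t ^ n) s) (j : ℤ) :
    cyclicConj n s t j = MulAut.conj (t ^ j) s := by
  have hc : MulAut.conj ((t ^ (n : ℤ)) ^ (j / n)) s = s := by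
    rw [zpow_natCast, MulAut.conj_apply, (h.zpow_left _).eq, mul_inv_cancel_right]
  rw [cyclicConj, ZMod.coe_intCast]
  conv_rhs => rw [← Int.emod_add_mul_ediv j n, zpow_add, zpow_mul, map_mul, MulAut.mul_apply, hc]

theorem map_cyclicConj {H : Type*} [Group H] (f : G →* H) (n : ℕ) (s t : G) (i : ZMod n) :
    f (cyclicConj n s t i) = cyclicConj n (f s) (f t) i := by
  rw [cyclicConj, cyclicConj, MulAut.conj_apply, MulAut.conj_apply, map_mul, map_mul, map_inv,
    map_zpow]

theorem IsRotation.cyclicConj_natCast (ht : IsRotation k s t) {j : ℕ} (hj : j ≤ k) :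
    cyclicConj (k + 2) (s 0) t j = s j := by
  have := cyclicConj_intCast ht.commute_pow j
  rw [Int.cast_natCast] at this
  rw [this, zpow_natCast, MulAut.conj_apply, ht.pow_mul hj, mul_inv_cancel_right]

theorem IsRotation.cyclicConj_add (ht : IsRotation k s t) (i : ZMod (k + 2)) (j : ZMod (k + 2)) :
    cyclicConj (k + 2) (s 0) t (i + j) =
      MulAut.conj (t ^ (i.cast : ℤ)) (cyclicConj (k + 2) (s 0) t j) := by
  have := cyclicConj_intCast ht.commute_pow (i.cast + j.cast)
  rw [Int.cast_add, ZMod.intCast_zmod_cast, ZMod.intCast_zmod_cast] at this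
  rw [this, zpow_add, map_mul, MulAut.mul_apply, cyclicConj]

end

theorem affineBraidRels_of_two_lt {n : ℕ} (hn : 2 < n) :
    affineBraidRels n = {r | (∃ i : ZMod n, r = braidRelWord i (i + 1)) ∨
      (∃ i j : ZMod n, i - j ≠ 1 ∧ i - j ≠ -1 ∧ r = commRelWord i j)} :=
  if_neg (by omega)

theorem affineBraidGen_braid {n : ℕ} (hn : 2 < n) (i : ZMod n) :
    affineBraidGen n i * (affineBraidGen n (i + 1) * affineBraidGen n i) =
      affineBraidGen n (i + 1) * (affineBraidGen n i * affineBraidGen n (i + 1)) :=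
  (map_braidRelWord_eq_one_iff (PresentedGroup.mk (affineBraidRels n))).1 <|
    PresentedGroup.one_of_mem <| by
      rw [affineBraidRels_of_two_lt hn]
      exact Or.inl ⟨i, rfl⟩

theorem affineBraidGen_comm {n : ℕ} (hn : 2 < n) {i j : ZMod n} (h₁ : i - j ≠ 1)
    (h₂ : i - j ≠ -1) :
    affineBraidGen n i * affineBraidGen n j = affineBraidGen n j * affineBraidGen n i :=
  (map_commRelWord_eq_one_iff (PresentedGroup.mk (affineBraidRels n))).1 <|
    PresentedGroup.one_of_mem <| by
      rw [affineBraidRels_of_two_lt hn]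
      exact Or.inr ⟨i, j, h₁, h₂, rfl⟩

namespace AffineBraidGroup

/-- A map on generators satisfying the defining relations extends to the affine braid group. -/
def lift {H : Type*} [Group H] {n : ℕ} (hn : 2 < n) (f : ZMod n → H)
    (hb : ∀ i, f i * (f (i + 1) * f i) = f (i + 1) * (f i * f (i + 1)))
    (hc : ∀ i j, i - j ≠ 1 → i - j ≠ -1 → f i * f j = f j * f i) : AffineBraidGroup n →* H :=
  PresentedGroup.toGroup (f := f) <| by
    rw [affineBraidRels_of_two_lt hn]
    rintro _ (⟨i, rfl⟩ | ⟨i, j, h₁, h₂, rfl⟩)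
    · simpa only [map_braidRelWord_eq_one_iff, FreeGroup.lift_apply_of] using hb i
    · simpa only [map_commRelWord_eq_one_iff, FreeGroup.lift_apply_of] using hc i j h₁ h₂

theorem lift_gen {H : Type*} [Group H] {n : ℕ} (hn : 2 < n) (f : ZMod n → H)
    (hb : ∀ i, f i * (f (i + 1) * f i) = f (i + 1) * (f i * f (i + 1)))
    (hc : ∀ i j, i - j ≠ 1 → i - j ≠ -1 → f i * f j = f j * f i) (i : ZMod n) :
    lift hn f hb hc (affineBraidGen n i) = f i := PresentedGroup.toGroup.of _

theorem hom_ext {H : Type*} [Group H] {n : ℕ} {f g : AffineBraidGroup n →* H}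
    (h : ∀ i, f (affineBraidGen n i) = g (affineBraidGen n i)) : f = g :=
  PresentedGroup.ext h

/-- The endomorphism of the affine braid group shifting the generators. -/
def shift {n : ℕ} (hn : 2 < n) (c : ZMod n) : AffineBraidGroup n →* AffineBraidGroup n :=
  lift hn (fun i => affineBraidGen n (i + c))
    (fun i => by
      rw [show i + 1 + c = i + c + 1 by ring]
      exact affineBraidGen_braid hn _)
    (fun i j h₁ h₂ => affineBraidGen_comm hn (by simpa using h₁) (by simpa using h₂))

theorem shift_comp_shift {n : ℕ} (hn : 2 < n) {c d : ZMod n} (h : d + c = 0) :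
    (shift hn c).comp (shift hn d) = MonoidHom.id _ :=
  hom_ext fun i => by simp [shift, lift_gen, add_assoc, h]

/-- The automorphism of the affine braid group rotating the affine diagram. -/
def rotation {n : ℕ} (hn : 2 < n) : MulAut (AffineBraidGroup n) :=
  MonoidHom.toMulEquiv (shift hn 1) (shift hn (-1)) (shift_comp_shift hn (by simp))
    (shift_comp_shift hn (by simp))

theorem rotation_gen {n : ℕ} (hn : 2 < n) (i : ZMod n) :
    rotation hn (affineBraidGen n i) = affineBraidGen n (i + 1) := by
  simp [rotation, shift, lift_gen]

/-- The extension of the affine braid group by the rotation of the affine diagram. -/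
abbrev Extended {n : ℕ} (hn : 2 < n) :=
  AffineBraidGroup n ⋊[zpowersHom (MulAut (AffineBraidGroup n)) (rotation hn)] Multiplicative ℤ

open SemidirectProduct

/-- The rotation element of the extended affine braid group. -/
def Extended.rot {n : ℕ} (hn : 2 < n) : Extended hn := inr (Multiplicative.ofAdd 1)

theorem Extended.rot_mul_inl {n : ℕ} (hn : 2 < n) (i : ZMod n) :
    rot hn * inl (affineBraidGen n i) = inl (affineBraidGen n (i + 1)) * rot hn := by
  have := inl_aut (φ := zpowersHom (MulAut (AffineBraidGroup n)) (rotation hn))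
    (Multiplicative.ofAdd 1) (affineBraidGen n i)
  rw [zpowersHom_apply, toAdd_ofAdd, zpow_one, rotation_gen] at this
  rw [this, map_inv, rot, inv_mul_cancel_right]

variable {k : ℕ}

theorem isBraidSequence_gen (hk : 2 < k + 2) :
    IsBraidSequence (k + 1) fun i => affineBraidGen (k + 2) i where
  braid i _ := by
    rw [Nat.cast_succ]
    exact affineBraidGen_braid hk _
  comm i j hij hj := by
    refine affineBraidGen_comm hk (fun h => ?_) fun h => ?_
    · rw [sub_eq_iff_eq_add', ← Nat.cast_succ, ZMod.natCast_eq_natCast_iff',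
        Nat.mod_eq_of_lt (by omega), Nat.mod_eq_of_lt (by omega)] at h
      omega
    · rw [sub_eq_iff_eq_add, neg_add_eq_sub, eq_sub_iff_add_eq, ← Nat.cast_succ,
        ZMod.natCast_eq_natCast_iff', Nat.mod_eq_of_lt (by omega), Nat.mod_eq_of_lt (by omega)] at h
      omega

theorem Extended.isBraidSequence (hk : 2 < k + 2) :
    IsBraidSequence (k + 1) fun i => (inl (affineBraidGen (k + 2) i) : Extended hk) where
  braid i hi := by simp only [← map_mul, (isBraidSequence_gen hk).braid i hi]
  comm i j hij hj := by simp only [← map_mul, (isBraidSequence_gen hk).comm i j hij hj]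

theorem Extended.isRotation (hk : 2 < k + 2) :
    IsRotation k (fun i => (inl (affineBraidGen (k + 2) i) : Extended hk)) (rot hk) where
  mul_succ i _ := by rw [rot_mul_inl, Nat.cast_succ]
  sq_mul_last := by
    rw [pow_two, mul_assoc, rot_mul_inl, ← mul_assoc, rot_mul_inl, mul_assoc]
    congr 3
    have := ZMod.natCast_self (k + 2)
    push_cast at this ⊢
    rw [add_assoc, one_add_one_eq_two, this]

section

variable {G : Type*} [Group G] {s : ℕ → G} {t : G}

theorem cyclicConj_braid (hk : 2 < k + 2) (h : IsBraidSequence (k + 1) s) (ht : IsRotation k s t)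
    (i : ZMod (k + 2)) :
    cyclicConj (k + 2) (s 0) t i *
        (cyclicConj (k + 2) (s 0) t (i + 1) * cyclicConj (k + 2) (s 0) t i) =
      cyclicConj (k + 2) (s 0) t (i + 1) *
        (cyclicConj (k + 2) (s 0) t i * cyclicConj (k + 2) (s 0) t (i + 1)) := by
  have h₁ := ht.cyclicConj_natCast (j := 1) (by omega)
  rw [Nat.cast_one] at h₁
  rw [ht.cyclicConj_add, h₁, cyclicConj]
  simp only [← map_mul, h.braid 0 (by omega)]

theorem cyclicConj_comm (h : IsBraidSequence (k + 1) s) (ht : IsRotation k s t)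
    {i j : ZMod (k + 2)} (h₁ : i - j ≠ 1) (h₂ : i - j ≠ -1) :
    cyclicConj (k + 2) (s 0) t i * cyclicConj (k + 2) (s 0) t j =
      cyclicConj (k + 2) (s 0) t j * cyclicConj (k + 2) (s 0) t i := by
  obtain ⟨d, rfl⟩ : ∃ d, i = j + d := ⟨i - j, by ring⟩
  rw [add_sub_cancel_left] at h₁ h₂
  obtain ⟨d, hd, rfl⟩ : ∃ l < k + 2, d = (l : ℕ) :=
    ⟨d.val, ZMod.val_lt d, (ZMod.natCast_zmod_val d).symm⟩
  have hd₁ : d ≠ 1 := by rintro rfl; simp at h₁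
  have hd₂ : d ≠ k + 1 := by
    rintro rfl
    apply h₂
    rw [eq_neg_iff_add_eq_zero, ← Nat.cast_succ, ZMod.natCast_self]
  rw [ht.cyclicConj_add, ht.cyclicConj_natCast (by omega), cyclicConj, ← map_mul, ← map_mul]
  rcases Nat.eq_zero_or_pos d with rfl | hd₀
  · rfl
  · rw [h.comm 0 d (by omega) (by omega)]

/-- The homomorphism from the affine braid group determined by a braid sequence with a rotation. -/
def liftRotation (hk : 2 < k + 2) (h : IsBraidSequence (k + 1) s) (ht : IsRotation k s t) :
    AffineBraidGroup (k + 2) →* G :=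
  lift hk (cyclicConj (k + 2) (s 0) t) (cyclicConj_braid hk h ht)
    (fun _ _ h₁ h₂ => cyclicConj_comm h ht h₁ h₂)

end

theorem Extended.cyclicConj_rot {n : ℕ} [NeZero n] (hn : 2 < n) (i : ZMod n) :
    cyclicConj n (inl (affineBraidGen n 0)) (rot hn) i = inl (affineBraidGen n i) := by
  have hpow (j : ℕ) : rot hn ^ j * inl (affineBraidGen n 0) =
      inl (affineBraidGen n j) * rot hn ^ j := by
    induction j with
    | zero => simp
    | succ j ih =>
      rw [pow_succ', mul_assoc, ih, ← mul_assoc, rot_mul_inl, mul_assoc, Nat.cast_succ]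
  rw [cyclicConj, ← ZMod.natCast_val, zpow_natCast, MulAut.conj_apply, hpow,
    mul_inv_cancel_right, ZMod.natCast_zmod_val]

/-- The embedding of the affine braid group into the annular braid group. -/
def toAnnular (hk : 2 < k + 2) : AffineBraidGroup (k + 2) →* AnnularBraidGroup (k + 1) :=
  liftRotation hk (AnnularBraidGroup.isAnnularSequence_gen k).toIsBraidSequence
    (AnnularBraidGroup.isAnnularSequence_gen k).isRotation

theorem toAnnular_injective (hk : 2 < k + 2) : Function.Injective (toAnnular hk) := by
  have hs := (Extended.isRotation hk).isAnnularSequence (Extended.isBraidSequence hk)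
  have hgen (i : ℕ) (hi : i < k + 1) := AnnularBraidGroup.lift_gen hs hi
  have hrot : AnnularBraidGroup.lift hs (AnnularBraidGroup.loop (k + 1) *
      seqProd (AnnularBraidGroup.gen (k + 1)) (k + 1)) = Extended.rot hk := by
    rw [map_mul, AnnularBraidGroup.lift_loop, map_seqProd, seqProd_congr hgen,
      inv_mul_cancel_right]
  have hcomp : (AnnularBraidGroup.lift hs).comp (toAnnular hk) = inl := by
    refine hom_ext fun i => ?_
    rw [MonoidHom.comp_apply, toAnnular, liftRotation, lift_gen, map_cyclicConj, hrot,
      hgen 0 (Nat.succ_pos k), Nat.cast_zero, Extended.cyclicConj_rot]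
  refine Function.Injective.of_comp (f := AnnularBraidGroup.lift hs) ?_
  rw [← MonoidHom.coe_comp, hcomp]
  exact inl_injective

end AffineBraidGroup

/-- For every `n ≥ 2`, the affine braid group `B(Ã_{n−1})` is torsion-free: if
`g ∈ B(Ã_{n−1})` and `g ^ k = 1` for some integer `k ≥ 1`, then `g = 1`. -/
theorem affineBraidGroup_torsionFree (n : ℕ) (hn : 2 ≤ n)
    (g : AffineBraidGroup n) (k : ℕ) (hk : 1 ≤ k) (h : g ^ k = 1) : g = 1 := by
  obtain ⟨m, rfl⟩ : ∃ m, n = m + 2 := ⟨n - 2, by omega⟩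
  rcases Nat.eq_zero_or_pos m with rfl | hm
  · have hrels : affineBraidRels (0 + 2) = ∅ := if_pos (by omega)
    let φ : AffineBraidGroup (0 + 2) →* FreeGroup (ZMod (0 + 2)) :=
      PresentedGroup.toGroup (f := FreeGroup.of) (by simp [hrels])
    have hφ : (PresentedGroup.mk _).comp φ = MonoidHom.id _ :=
      PresentedGroup.ext fun i => by
        rw [MonoidHom.comp_apply, PresentedGroup.toGroup.of]
        rfl
    have h₁ : φ g = 1 := FreeGroup.eq_one_of_pow_eq_one hk _ (by rw [← map_pow, h, map_one])
    rw [← MonoidHom.id_apply _ g, ← hφ, MonoidHom.comp_apply, h₁, map_one]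
  · have hm' : 2 < m + 2 := by omega
    apply AffineBraidGroup.toAnnular_injective hm'
    rw [map_one]
    exact AnnularBraidGroup.eq_one_of_pow_eq_one hk (by rw [← map_pow, h, map_one])
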